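/- The formal power series I(x) satisfies the differential equation x²·I′(x) = −I(x)² + (1+x)·I(x) − x in ℚ[[x]], where I′ denotes the formal derivative; equivalently, I′ = −x^{−2}I² + (x^{−2}+x^{−1})I − x^{−1}. -/

import Mathlib

def PlusIndec {n : ℕ} (π : Equiv.Perm (Fin n)) : Prop :=
  ¬ ∃ k : ℕ, 1 ≤ k ∧ k < n ∧
    (Finset.univ.filter fun i : Fin n => (i : ℕ) < k).image π =
      Finset.univ.filter fun i : Fin n => (i : ℕ) < k

noncomputable def plusIndecCount (n : ℕ) : ℕ :=
  Nat.card {π : Equiv.Perm (Fin n) // PlusIndec π}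

noncomputable def Ips : PowerSeries ℚ :=
  PowerSeries.mk fun k => if k = 0 then 0 else (plusIndecCount k : ℚ)

/-!
Every nonempty permutation splits uniquely as `σ ⊕ τ` with `σ` plus indecomposable and nonempty:
cut after the shortest nonempty prefix that is mapped to itself. For `F = ∑ n! xⁿ` this reads
`F = 1 + I F`, i.e. `(1 - I) F = 1`. Since `(n + 1)! = n! + n n!`, the series `F` satisfies the
linear equation `x² F' = (1 - x) F - 1`, and the substitution `I = 1 - F⁻¹` turns it into the
Riccati equation for `I`.
-/

open Equiv Finset PowerSeries
open scoped Nat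

section Prefix

variable {n k : ℕ}

/-- The permutation `π` of `{0, …, n - 1}` maps the initial segment `{0, …, k - 1}` into (hence
onto) itself. -/
def PreservesPrefix (π : Perm (Fin n)) (k : ℕ) : Prop :=
  ∀ i : Fin n, (i : ℕ) < k → (π i : ℕ) < k

theorem preservesPrefix_of_le (π : Perm (Fin n)) (h : n ≤ k) : PreservesPrefix π k :=
  fun i _ => (π i).isLt.trans_le h

theorem preservesPrefix_iff_image_eq (π : Perm (Fin n)) (k : ℕ) :
    PreservesPrefix π k ↔
      (univ.filter fun i : Fin n => (i : ℕ) < k).image π =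
        univ.filter fun i : Fin n => (i : ℕ) < k := by
  have subset_iff : PreservesPrefix π k ↔
      (univ.filter fun i : Fin n => (i : ℕ) < k).image π ⊆
        univ.filter fun i : Fin n => (i : ℕ) < k := by
    simp [PreservesPrefix, image_subset_iff]
  rw [subset_iff]
  exact ⟨fun h => eq_of_subset_of_card_le h (card_image_of_injective _ π.injective).ge,
    fun h => h.subset⟩

theorem plusIndec_iff_forall_not_preservesPrefix (π : Perm (Fin n)) :
    PlusIndec π ↔ ∀ j, 0 < j → j < n → ¬ PreservesPrefix π j := by
  simp only [PlusIndec, ← preservesPrefix_iff_image_eq, not_exists, not_and, Nat.succ_le_iff]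

theorem exists_pos_preservesPrefix (π : Perm (Fin n)) : ∃ k, 0 < k ∧ PreservesPrefix π k :=
  ⟨n + 1, n.succ_pos, preservesPrefix_of_le π n.le_succ⟩

open Classical in
/-- The length of the first block in the decomposition of `π` into plus indecomposable blocks: the
least `k > 0` such that `π` preserves the prefix of length `k`. The empty permutation, which has
no block, gets the junk value `1`. -/
noncomputable def firstBlockLength (π : Perm (Fin n)) : ℕ :=
  Nat.find (exists_pos_preservesPrefix π)

theorem firstBlockLength_pos (π : Perm (Fin n)) : 0 < firstBlockLength π := by
  classical exact (Nat.find_spec (exists_pos_preservesPrefix π)).1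

theorem preservesPrefix_firstBlockLength (π : Perm (Fin n)) :
    PreservesPrefix π (firstBlockLength π) := by
  classical exact (Nat.find_spec (exists_pos_preservesPrefix π)).2

theorem firstBlockLength_le {π : Perm (Fin n)} (hk : 0 < k) (h : PreservesPrefix π k) :
    firstBlockLength π ≤ k := by
  classical exact Nat.find_min' (exists_pos_preservesPrefix π) ⟨hk, h⟩

theorem firstBlockLength_le_length (hn : 0 < n) (π : Perm (Fin n)) : firstBlockLength π ≤ n :=
  firstBlockLength_le hn (preservesPrefix_of_le π le_rfl)

theorem plusIndec_iff_firstBlockLength_eq (hn : 0 < n) (π : Perm (Fin n)) :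
    PlusIndec π ↔ firstBlockLength π = n := by
  rw [plusIndec_iff_forall_not_preservesPrefix]
  constructor
  · intro h
    refine (firstBlockLength_le_length hn π).eq_of_not_lt fun hlt => ?_
    exact h _ (firstBlockLength_pos π) hlt (preservesPrefix_firstBlockLength π)
  · intro h j hj hjn hπ
    exact (firstBlockLength_le hj hπ).not_gt (h.symm ▸ hjn)

end Prefix

section DirectSum

variable {k m : ℕ}

/-- The direct sum `σ ⊕ τ` of two permutations: `σ` acts on the first `k` points and `τ`, shifted
by `k`, on the last `m` points. -/
def permDirectSum (σ : Perm (Fin k)) (τ : Perm (Fin m)) : Perm (Fin (k + m)) :=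
  finSumFinEquiv.permCongr (sumCongr σ τ)

@[simp]
theorem permDirectSum_castAdd (σ : Perm (Fin k)) (τ : Perm (Fin m)) (i : Fin k) :
    permDirectSum σ τ (Fin.castAdd m i) = Fin.castAdd m (σ i) := by
  simp [permDirectSum]

theorem permDirectSum_injective2 : Function.Injective2 (permDirectSum (k := k) (m := m)) := by
  intro σ σ' τ τ' h
  exact Prod.mk.inj (Perm.sumCongrHom_injective
    (a₁ := (σ, τ)) (a₂ := (σ', τ')) (finSumFinEquiv.permCongr.injective h))

theorem preservesPrefix_permDirectSum_iff {j : ℕ} (hj : j ≤ k) (σ : Perm (Fin k))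
    (τ : Perm (Fin m)) : PreservesPrefix (permDirectSum σ τ) j ↔ PreservesPrefix σ j := by
  constructor
  · intro h i hi
    simpa using h (Fin.castAdd m i) hi
  · intro h i hi
    obtain ⟨i, rfl⟩ : ∃ i', Fin.castAdd m i' = i := ⟨⟨i, hi.trans_le hj⟩, rfl⟩
    simpa using h i hi

theorem exists_permDirectSum_eq {π : Perm (Fin (k + m))} (h : PreservesPrefix π k) :
    ∃ σ τ, permDirectSum σ τ = π := by
  have mapsTo_inl : Set.MapsTo (finSumFinEquiv.permCongr.symm π)
      (Set.range (Sum.inl : Fin k → Fin k ⊕ Fin m)) (Set.range Sum.inl) := by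
    rintro _ ⟨i, rfl⟩
    have hi : (π (Fin.castAdd m i) : ℕ) < k := h _ i.isLt
    refine ⟨⟨_, hi⟩, finSumFinEquiv.injective ?_⟩
    ext
    simp
  obtain ⟨⟨σ, τ⟩, hστ⟩ := Perm.mem_sumCongrHom_range_of_perm_mapsTo_inl mapsTo_inl
  exact ⟨σ, τ, finSumFinEquiv.permCongr.eq_symm_apply.mp hστ⟩

theorem firstBlockLength_permDirectSum (hk : 0 < k) (σ : Perm (Fin k)) (τ : Perm (Fin m)) :
    firstBlockLength (permDirectSum σ τ) = firstBlockLength σ := by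
  have hσ : firstBlockLength σ ≤ k := firstBlockLength_le_length hk σ
  have hle : firstBlockLength (permDirectSum σ τ) ≤ firstBlockLength σ :=
    firstBlockLength_le (firstBlockLength_pos σ)
      ((preservesPrefix_permDirectSum_iff hσ σ τ).2 (preservesPrefix_firstBlockLength σ))
  refine hle.antisymm (firstBlockLength_le (firstBlockLength_pos _) ?_)
  exact (preservesPrefix_permDirectSum_iff (hle.trans hσ) σ τ).1
    (preservesPrefix_firstBlockLength _)

theorem setOf_firstBlockLength_eq (hk : 0 < k) :
    {π : Perm (Fin (k + m)) | firstBlockLength π = k} =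
      Set.image2 permDirectSum {σ | PlusIndec σ} Set.univ := by
  ext π
  constructor
  · intro (hπ : firstBlockLength π = k)
    obtain ⟨σ, τ, rfl⟩ := exists_permDirectSum_eq (hπ ▸ preservesPrefix_firstBlockLength π)
    rw [firstBlockLength_permDirectSum hk] at hπ
    exact ⟨σ, (plusIndec_iff_firstBlockLength_eq hk σ).2 hπ, τ, trivial, rfl⟩
  · rintro ⟨σ, hσ, τ, -, rfl⟩
    exact (firstBlockLength_permDirectSum hk σ τ).trans
      ((plusIndec_iff_firstBlockLength_eq hk σ).1 hσ)

theorem ncard_setOf_firstBlockLength_eq {n : ℕ} (hk : 0 < k) (hn : k + m = n) :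
    {π : Perm (Fin n) | firstBlockLength π = k}.ncard = plusIndecCount k * m ! := by
  subst hn
  rw [setOf_firstBlockLength_eq hk, ← Set.image_uncurry_prod,
    Set.ncard_image_of_injective _ permDirectSum_injective2.uncurry, Set.ncard_prod,
    Set.ncard_univ, Nat.card_perm, Nat.card_fin]
  rfl

end DirectSum

theorem factorial_succ_eq_sum_plusIndecCount (n : ℕ) :
    (n + 1)! = ∑ p ∈ antidiagonal n, plusIndecCount (p.1 + 1) * p.2! := by
  classical
  let blockSplit (π : Perm (Fin (n + 1))) : ℕ × ℕ :=
    (firstBlockLength π - 1, n + 1 - firstBlockLength π)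
  have bounds (π : Perm (Fin (n + 1))) : 0 < firstBlockLength π ∧ firstBlockLength π ≤ n + 1 :=
    ⟨firstBlockLength_pos π, firstBlockLength_le_length n.succ_pos π⟩
  have blockSplit_mem (π) : blockSplit π ∈ antidiagonal n := by
    grind [HasAntidiagonal.mem_antidiagonal]
  have blockSplit_eq_iff (π) {p} (hp : p ∈ antidiagonal n) :
      blockSplit π = p ↔ firstBlockLength π = p.1 + 1 := by
    grind [HasAntidiagonal.mem_antidiagonal]
  calc (n + 1)! = #(univ : Finset (Perm (Fin (n + 1)))) := by
        rw [card_univ, Fintype.card_perm, Fintype.card_fin]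
    _ = ∑ p ∈ antidiagonal n, #{π | blockSplit π = p} :=
        card_eq_sum_card_fiberwise fun π _ => blockSplit_mem π
    _ = ∑ p ∈ antidiagonal n, plusIndecCount (p.1 + 1) * p.2! := by
        refine sum_congr rfl fun p hp => ?_
        have hsum : p.1 + 1 + p.2 = n + 1 := by grind [HasAntidiagonal.mem_antidiagonal]
        rw [← ncard_setOf_firstBlockLength_eq p.1.succ_pos hsum, ← Set.ncard_coe_finset]
        simp [blockSplit_eq_iff _ hp]

/-- The generating series `∑ n! xⁿ` of all permutations counted by length. -/
def factorialSeries (R : Type*) [Semiring R] : R⟦X⟧ :=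
  PowerSeries.mk fun n => (n ! : R)

theorem factorialSeries_eq_one_add_X_mul (R : Type*) [CommSemiring R] :
    factorialSeries R = 1 + X * (factorialSeries R + X * d⁄dX R (factorialSeries R)) := by
  ext n
  rcases n with _ | _ | n
  · simp [factorialSeries]
  · simp [factorialSeries, coeff_succ_X_mul]
  · simp only [factorialSeries, map_add, coeff_one, coeff_succ_X_mul, coeff_derivative, coeff_mk,
      Nat.factorial_succ]
    push_cast
    ring_nf

theorem factorialSeries_eq_one_add_Ips_mul :
    factorialSeries ℚ = 1 + Ips * factorialSeries ℚ := by
  ext n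
  rcases n with _ | n
  · simp [factorialSeries, Ips]
  · simp [factorialSeries, Ips, coeff_mul, coeff_one, Nat.sum_antidiagonal_succ,
      factorial_succ_eq_sum_plusIndecCount]

theorem riccati_of_linear_of_mul_eq_one {R A : Type*} [CommRing R] [CommRing A] [Algebra R A]
    (D : Derivation R A A) {a b c f g : A} (hfg : f * g = 1) (hg : a * D g = b * g - c) :
    a * D f = c * f ^ 2 - b * f := by
  have derivative_inverse : D f = -f ^ 2 * D g := by
    simpa using D.leibniz_of_mul_eq_one hfg
  calc a * D f = -f ^ 2 * (a * D g) := by rw [derivative_inverse]; ring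
    _ = c * f ^ 2 - b * f * (f * g) := by rw [hg]; ring
    _ = c * f ^ 2 - b * f := by rw [hfg, mul_one]

/-- `x²·I′(x) = -I(x)² + (1+x)·I(x) - x` in `ℚ[[x]]`, i.e.
`I′ = -x⁻²I² + (x⁻²+x⁻¹)I - x⁻¹`. -/
theorem I_differential_equation :
    PowerSeries.X ^ 2 * PowerSeries.derivativeFun Ips =
      -(Ips ^ 2) + (1 + PowerSeries.X) * Ips - PowerSeries.X := by
  have inverse : (1 - Ips) * factorialSeries ℚ = 1 := by
    linear_combination factorialSeries_eq_one_add_Ips_mul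
  have linear : X ^ 2 * d⁄dX ℚ (factorialSeries ℚ) = (1 - X) * factorialSeries ℚ - 1 := by
    linear_combination -factorialSeries_eq_one_add_X_mul ℚ
  have riccati : X ^ 2 * d⁄dX ℚ (1 - Ips) = 1 * (1 - Ips) ^ 2 - (1 - X) * (1 - Ips) :=
    riccati_of_linear_of_mul_eq_one _ inverse linear
  rw [map_sub, derivative_one] at riccati
  change X ^ 2 * d⁄dX ℚ Ips = -(Ips ^ 2) + (1 + X) * Ips - X
  linear_combination -riccati
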